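/- arXiv:2509.24716 — 2 statements merged into one kernel-verified Lean document; each statement's English description precedes it below -/
import Mathlib

section
/- Let Z be a nonempty finite type, let q_θ be a probability vector on Z with full support, let A : Z → ℝ, let β > 0, η ≥ 0, and ε ≥ 0. For every probability vector q on Z with full support satisfying the trust-region constraint KL(q‖q_θ) ≤ ε, one has ∑_z q z · A z + β·H(q) ≤ (η+β) · log ∑_z exp((A z + η·log(q_θ z))/(η+β)) + η·ε. (Weak duality for the KL-constrained policy-search problem.) -/
/-- Weak duality for the KL-constrained policy-search problem.
For any full-support probability vector `q` with `KL(q‖q_θ) ≤ ε`,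
`∑_z q z · A z + β·H(q) ≤ (η+β)·log ∑_z exp((A z + η·log(q_θ z))/(η+β)) + η·ε`. -/
theorem daps_weak_duality {Z : Type*} [Fintype Z] [Nonempty Z]
    (qθ : Z → ℝ) (hqθ0 : ∀ z, 0 < qθ z) (hqθ1 : ∑ z, qθ z = 1)
    (A : Z → ℝ) (β η ε : ℝ) (hβ : 0 < β) (hη : 0 ≤ η) (hε : 0 ≤ ε)
    (q : Z → ℝ) (hq0 : ∀ z, 0 < q z) (hq1 : ∑ z, q z = 1)
    (hKL : ∑ z, q z * Real.log (q z / qθ z) ≤ ε) :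
    (∑ z, q z * A z) + β * (-∑ z, q z * Real.log (q z))
      ≤ (η + β) * Real.log (∑ z, Real.exp ((A z + η * Real.log (qθ z)) / (η + β))) + η * ε := by
  have hc : 0 < η + β := by linarith
  set B : Z → ℝ := fun z => (A z + η * Real.log (qθ z)) / (η + β) with hB
  have hS : 0 < ∑ z, Real.exp (B z) :=
    Finset.sum_pos (fun z _ => Real.exp_pos _) Finset.univ_nonempty
  change _ ≤ (η + β) * Real.log (∑ z, Real.exp (B z)) + η * ε
  generalize hSe : ∑ z, Real.exp (B z) = S at hS ⊢
  have key : ∀ z, q z * (B z - Real.log (q z) - Real.log S) ≤ Real.exp (B z) / S - q z := by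
    intro z
    have hq := hq0 z
    have h := Real.log_le_sub_one_of_pos (x := Real.exp (B z) / (q z * S)) (by positivity)
    rw [Real.log_div (by positivity) (by positivity), Real.log_exp,
      Real.log_mul hq.ne' hS.ne'] at h
    have h2 := mul_le_mul_of_nonneg_left h hq.le
    have h3 : q z * (Real.exp (B z) / (q z * S) - 1) = Real.exp (B z) / S - q z := by
      field_simp
    linarith
  have hsum := Finset.sum_le_sum (s := Finset.univ) (fun z _ => key z)
  rw [Finset.sum_sub_distrib, ← Finset.sum_div, hSe, div_self hS.ne', hq1, sub_self] at hsum
  have h1 : ∑ z, q z * (B z - Real.log (q z) - Real.log S)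
      = ∑ z, q z * B z - ∑ z, q z * Real.log (q z) - Real.log S := by
    simp only [mul_sub, Finset.sum_sub_distrib, ← Finset.sum_mul, hq1, one_mul]
  have h2 : (η + β) * ∑ z, q z * B z
      = ∑ z, q z * A z + η * ∑ z, q z * Real.log (qθ z) := by
    rw [Finset.mul_sum, Finset.mul_sum, ← Finset.sum_add_distrib]
    refine Finset.sum_congr rfl fun z _ => ?_
    simp only [hB]
    field_simp
  have h3 : ∑ z, q z * Real.log (q z / qθ z)
      = ∑ z, q z * Real.log (q z) - ∑ z, q z * Real.log (qθ z) := by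
    rw [← Finset.sum_sub_distrib]
    refine Finset.sum_congr rfl fun z _ => ?_
    rw [Real.log_div (hq0 z).ne' (hqθ0 z).ne', mul_sub]
  rw [h3] at hKL
  rw [h1] at hsum
  have h4 := mul_le_mul_of_nonneg_left hKL hη
  have h5 := mul_le_mul_of_nonneg_left hsum hc.le
  rw [mul_sub, mul_sub, h2] at h5
  linarith
end

section
/- Let Z be a nonempty finite type, let q_θ be a probability vector on Z with full support, let A : Z → ℝ, let β > 0 and ε ∈ ℝ. Define the dual function G : (0,∞) → ℝ by G(η) = (η+β) · log ∑_z exp((A z + η·log(q_θ z))/(η+β)) + η·ε, and for each η > 0 define the Gibbs distribution q*_η(z) = exp((A z + η·log(q_θ z))/(η+β)) / ∑_{z'} exp((A z' + η·log(q_θ z'))/(η+β)). Then for every η₀ > 0, G is differentiable at η₀ with derivative G'(η₀) = ε − KL(q*_{η₀}‖q_θ). -/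
/-- The dual function
`G(η) = (η+β)·log ∑_z exp((A z + η·log(q_θ z))/(η+β)) + η·ε`
is differentiable at every `η₀ > 0`, with derivative `ε − KL(q*_{η₀}‖q_θ)` where
`q*_{η₀}` is the Gibbs distribution at `η₀`. -/
theorem daps_dual_derivative {Z : Type*} [Fintype Z] [Nonempty Z]
    (qθ : Z → ℝ) (hqθ0 : ∀ z, 0 < qθ z) (hqθ1 : ∑ z, qθ z = 1)
    (A : Z → ℝ) (β ε : ℝ) (hβ : 0 < β)
    (η₀ : ℝ) (hη₀ : 0 < η₀)
    (qstar : Z → ℝ)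
    (hqstar : qstar = fun z => Real.exp ((A z + η₀ * Real.log (qθ z)) / (η₀ + β)) /
        ∑ z', Real.exp ((A z' + η₀ * Real.log (qθ z')) / (η₀ + β))) :
    HasDerivAt
      (fun η : ℝ =>
        (η + β) * Real.log (∑ z, Real.exp ((A z + η * Real.log (qθ z)) / (η + β))) + η * ε)
      (ε - ∑ z, qstar z * Real.log (qstar z / qθ z)) η₀ := by
  have hb : η₀ + β ≠ 0 := by positivity
  have hf : ∀ z, HasDerivAt (fun η : ℝ => (A z + η * Real.log (qθ z)) / (η + β))
      ((Real.log (qθ z) - (A z + η₀ * Real.log (qθ z)) / (η₀ + β)) / (η₀ + β)) η₀ := by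
    intro z
    have h1 : HasDerivAt (fun η : ℝ => A z + η * Real.log (qθ z)) (1 * Real.log (qθ z)) η₀ :=
      ((hasDerivAt_id η₀).mul_const _).const_add _
    have h2 : HasDerivAt (fun η : ℝ => η + β) 1 η₀ := (hasDerivAt_id η₀).add_const _
    refine (h1.fun_div h2 hb).congr_deriv ?_
    field_simp
  have hS := HasDerivAt.fun_sum (u := Finset.univ) (fun z _ => (hf z).exp)
  have hpos : 0 < ∑ z, Real.exp ((A z + η₀ * Real.log (qθ z)) / (η₀ + β)) :=
    Finset.sum_pos (fun z _ => Real.exp_pos _) Finset.univ_nonempty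
  have h2 : HasDerivAt (fun η : ℝ => η + β) 1 η₀ := (hasDerivAt_id η₀).add_const _
  have hG := (h2.fun_mul (hS.log hpos.ne')).fun_add ((hasDerivAt_id η₀).mul_const ε)
  refine hG.congr_deriv ?_
  subst hqstar
  generalize hSdef : ∑ z, Real.exp ((A z + η₀ * Real.log (qθ z)) / (η₀ + β)) = S at *
  have key : ∀ z, Real.exp ((A z + η₀ * Real.log (qθ z)) / (η₀ + β)) / S *
      Real.log (Real.exp ((A z + η₀ * Real.log (qθ z)) / (η₀ + β)) / S / qθ z) =
      -((η₀ + β) / S * (Real.exp ((A z + η₀ * Real.log (qθ z)) / (η₀ + β)) *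
        ((Real.log (qθ z) - (A z + η₀ * Real.log (qθ z)) / (η₀ + β)) / (η₀ + β))))
      - Real.log S / S * Real.exp ((A z + η₀ * Real.log (qθ z)) / (η₀ + β)) := by
    intro z
    rw [Real.log_div (by positivity) (hqθ0 z).ne', Real.log_div (by positivity) hpos.ne',
      Real.log_exp]
    generalize Real.exp ((A z + η₀ * Real.log (qθ z)) / (η₀ + β)) = e
    field_simp
    ring
  simp only [key]
  rw [Finset.sum_sub_distrib, Finset.sum_neg_distrib, ← Finset.mul_sum, ← Finset.mul_sum, hSdef]
  field_simp
  ring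
end
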